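/- arXiv:math/0703520 — 3 statements merged into one kernel-verified Lean document; each statement's English description precedes it below -/
import Mathlib

section
/- For the one-variable modified Bessel function j_κ(z) = ₀F₁(κ+1; -z²/4) = Γ(κ+1) ∑_{n≥0} (-1)ⁿ (z/2)^{2n} / (n! Γ(n+κ+1)), there is a constant C > 0 such that for all μ > 3 and all x ≥ 0: |j_{μ-1}(2√(μx)) - e^{-x}| ≤ (C/μ)·min(1, x²). -/
/-- The one-variable modified Bessel function
`j_κ(z) = ₀F₁(κ+1; -z²/4) = Γ(κ+1) ∑_{n≥0} (-1)ⁿ (z/2)^{2n} / (n! Γ(n+κ+1))`. -/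
noncomputable def besselJSmall (κ z : ℝ) : ℝ :=
  Real.Gamma (κ + 1) *
    ∑' n : ℕ, (-1 : ℝ) ^ n * (z / 2) ^ (2 * n) / ((n.factorial : ℝ) * Real.Gamma (n + κ + 1))

/-!
Write `φ_ν(y) = ₀F₁(ν; -y)`, so that `j_{μ-1}(2√(μx)) = φ_μ(μx)`. Since `φ_ν' = -φ_{ν+1}/ν`, the
function `f(x) = φ_μ(μx)` satisfies `f + f' = φ_μ(μx) - φ_{μ+1}(μx)`, which by the contiguous
relation equals `-y φ_{μ+2}(y) / (μ(μ+1))` at `y = μx`. A bound on this defect gives, through the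
integrating factor `eˣ`, a bound on `f(x) - e⁻ˣ`.

For `ν ≥ 1/2`, both `φ_ν` on `[0, ∞)` and `y φ_{ν+2}(y)` on `[2ν, ∞)` solve second order equations
`r u'' + p u' + u = 0` with `r' ≤ 2p`, for which Sonin's function `u² + r u'²` is nonincreasing.
Hence `|φ_ν| ≤ 1` and `|y φ_{ν+2}(y)| ≤ 4(ν+1)`: the first estimate gives the factor `x²`, the
second the factor `1`.
-/

open Set
open scoped Nat

section ExponentialSeries

variable {𝕜 : Type*} [RCLike 𝕜] {c : ℕ → 𝕜} {M K : ℝ}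

lemma norm_mul_pow_div_factorial_le (hc : ∀ n, ‖c n‖ ≤ M * K ^ n) {y : 𝕜} {R : ℝ} (hy : ‖y‖ ≤ R)
    (n : ℕ) : ‖c n * (y ^ n / n !)‖ ≤ M * ((K * R) ^ n / n !) := by
  calc ‖c n * (y ^ n / n !)‖ = ‖c n‖ * (‖y‖ ^ n / n !) := by
        rw [norm_mul, norm_div, norm_pow, RCLike.norm_natCast]
    _ ≤ M * K ^ n * (R ^ n / n !) := by
        have := (norm_nonneg _).trans (hc n)
        gcongr
        exact hc n
    _ = M * ((K * R) ^ n / n !) := by ring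

lemma summable_mul_pow_div_factorial (hc : ∀ n, ‖c n‖ ≤ M * K ^ n) (y : 𝕜) :
    Summable fun n ↦ c n * (y ^ n / n !) :=
  .of_norm_bounded ((Real.summable_pow_div_factorial _).mul_left M)
    (norm_mul_pow_div_factorial_le hc le_rfl)

lemma norm_shift_le_mul_pow (hc : ∀ n, ‖c n‖ ≤ M * K ^ n) (n : ℕ) :
    ‖c (n + 1)‖ ≤ M * K * K ^ n :=
  (hc (n + 1)).trans_eq (by ring)

lemma succ_mul_pow_div_factorial_succ (y : 𝕜) (n : ℕ) :
    ((n + 1 : ℕ) : 𝕜) * y ^ n / (n + 1)! = y ^ n / n ! := by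
  have hn : ((n + 1 : ℕ) : 𝕜) ≠ 0 := Nat.cast_ne_zero.2 n.succ_ne_zero
  rw [Nat.factorial_succ, Nat.cast_mul, mul_div_mul_left _ _ hn]

lemma hasSum_natCast_mul_mul_pow_div_factorial (hc : ∀ n, ‖c n‖ ≤ M * K ^ n) (y : 𝕜) :
    HasSum (fun n : ℕ ↦ n * (c n * (y ^ n / n !))) (y * ∑' n, c (n + 1) * (y ^ n / n !)) := by
  have hshift := (summable_mul_pow_div_factorial (norm_shift_le_mul_pow hc) y).hasSum.mul_left y
  rw [← hasSum_nat_add_iff' 1]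
  simp only [Finset.range_one, Finset.sum_singleton, Nat.cast_zero, zero_mul, sub_zero]
  refine hshift.congr_fun fun n ↦ ?_
  rw [← succ_mul_pow_div_factorial_succ y n]
  ring

lemma hasDerivAt_tsum_mul_pow_div_factorial (hc : ∀ n, ‖c n‖ ≤ M * K ^ n) (y : 𝕜) :
    HasDerivAt (fun z ↦ ∑' n, c n * (z ^ n / n !)) (∑' n, c (n + 1) * (y ^ n / n !)) y := by
  have hterm (n : ℕ) (z : 𝕜) : HasDerivAt (fun z ↦ c (n + 1) * (z ^ (n + 1) / (n + 1)!))
      (c (n + 1) * (z ^ n / n !)) z := by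
    rw [← succ_mul_pow_div_factorial_succ z n]
    exact ((hasDerivAt_pow (n + 1) z).div_const _).const_mul _
  have hball : y ∈ Metric.ball (0 : 𝕜) (‖y‖ + 1) := by simp
  have hsummable : Summable fun n ↦ c (n + 1) * (y ^ (n + 1) / (n + 1)!) :=
    (summable_nat_add_iff (f := fun n ↦ c n * (y ^ n / n !)) 1).2
      (summable_mul_pow_div_factorial hc y)
  have htail : HasDerivAt (fun z ↦ ∑' n, c (n + 1) * (z ^ (n + 1) / (n + 1)!))
      (∑' n, c (n + 1) * (y ^ n / n !)) y :=
    hasDerivAt_tsum_of_isPreconnected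
      ((Real.summable_pow_div_factorial (K * (‖y‖ + 1))).mul_left (M * K)) Metric.isOpen_ball
      Metric.isPreconnected_ball (fun n z _ ↦ hterm n z)
      (fun n z hz ↦ norm_mul_pow_div_factorial_le (norm_shift_le_mul_pow hc)
        (mem_ball_zero_iff.1 hz).le n)
      hball hsummable hball
  have hsplit (z : 𝕜) : ∑' n, c n * (z ^ n / n !) =
      c 0 + ∑' n, c (n + 1) * (z ^ (n + 1) / (n + 1)!) := by
    rw [(summable_mul_pow_div_factorial hc z).tsum_eq_zero_add]
    simp
  simpa only [hsplit] using htail.const_add (c 0)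

end ExponentialSeries

/-- The coefficient `(-1)ⁿ / (ν(ν+1)⋯(ν+n-1))` of `yⁿ / n!` in `₀F₁(ν; -y)`, with the rising
factorial written as the quotient `Γ(n+ν) / Γ(ν)`, which it is unless `ν ∈ {0, -1, -2, …}`. -/
noncomputable def normalizedBesselCoeff (ν : ℝ) (n : ℕ) : ℝ :=
  (-1) ^ n * Real.Gamma ν / Real.Gamma (n + ν)

/-- The function `₀F₁(ν; -y)`, that is, the Bessel function `j_{ν-1}` normalized to be `1` at the
origin and expressed in the variable `y = z² / 4`, in which it is entire. -/
noncomputable def normalizedBessel (ν y : ℝ) : ℝ :=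
  ∑' n : ℕ, normalizedBesselCoeff ν n * (y ^ n / n !)

lemma besselJSmall_two_mul_sqrt (κ : ℝ) {y : ℝ} (hy : 0 ≤ y) :
    besselJSmall κ (2 * √y) = normalizedBessel (κ + 1) y := by
  rw [besselJSmall, normalizedBessel, ← tsum_mul_left]
  refine tsum_congr fun n ↦ ?_
  rw [mul_div_cancel_left₀ _ two_ne_zero, pow_mul, Real.sq_sqrt hy, normalizedBesselCoeff,
    ← add_assoc]
  ring

section NormalizedBessel

variable {ν : ℝ}

lemma normalizedBesselCoeff_zero (hν : 0 < ν) : normalizedBesselCoeff ν 0 = 1 := by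
  simp [normalizedBesselCoeff, (Real.Gamma_pos_of_pos hν).ne']

lemma normalizedBesselCoeff_succ (hν : ν ≠ 0) (n : ℕ) :
    normalizedBesselCoeff ν (n + 1) = -(normalizedBesselCoeff (ν + 1) n / ν) := by
  rw [normalizedBesselCoeff, normalizedBesselCoeff, Real.Gamma_add_one hν, Nat.cast_succ,
    add_assoc, add_comm 1 ν]
  field_simp
  ring

lemma add_mul_normalizedBesselCoeff_add_one (hν : 0 < ν) (n : ℕ) :
    (ν + n) * normalizedBesselCoeff (ν + 1) n = ν * normalizedBesselCoeff ν n := by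
  have hn : (n : ℝ) + ν ≠ 0 := by positivity
  rw [normalizedBesselCoeff, normalizedBesselCoeff, ← add_assoc, Real.Gamma_add_one hν.ne',
    Real.Gamma_add_one hn]
  field_simp
  ring

lemma norm_normalizedBesselCoeff_le (hν : 0 < ν) (n : ℕ) :
    ‖normalizedBesselCoeff ν n‖ ≤ 1 * ν⁻¹ ^ n := by
  rw [one_mul]
  induction n generalizing ν with
  | zero => simp [normalizedBesselCoeff_zero hν]
  | succ n ih =>
    rw [normalizedBesselCoeff_succ hν.ne', norm_neg, norm_div, Real.norm_of_nonneg hν.le,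
      div_eq_mul_inv, pow_succ]
    gcongr
    calc ‖normalizedBesselCoeff (ν + 1) n‖ ≤ (ν + 1)⁻¹ ^ n := ih (by linarith)
      _ ≤ ν⁻¹ ^ n := by gcongr; linarith

lemma normalizedBessel_zero (hν : 0 < ν) : normalizedBessel ν 0 = 1 := by
  rw [normalizedBessel, tsum_eq_single 0 fun n hn ↦ by simp [hn]]
  simp [normalizedBesselCoeff_zero hν]

lemma tsum_normalizedBesselCoeff_succ (hν : ν ≠ 0) (y : ℝ) :
    ∑' n : ℕ, normalizedBesselCoeff ν (n + 1) * (y ^ n / n !) =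
      -(normalizedBessel (ν + 1) y / ν) := by
  simp only [normalizedBesselCoeff_succ hν, normalizedBessel, neg_mul, div_mul_eq_mul_div, tsum_neg,
    tsum_div_const]

lemma hasDerivAt_normalizedBessel (hν : 0 < ν) (y : ℝ) :
    HasDerivAt (normalizedBessel ν) (-(normalizedBessel (ν + 1) y / ν)) y := by
  rw [← tsum_normalizedBesselCoeff_succ hν.ne']
  exact hasDerivAt_tsum_mul_pow_div_factorial (norm_normalizedBesselCoeff_le hν) y

-- Termwise, this says that `ν + y d/dy` maps `₀F₁(ν + 1; -y)` to `ν ₀F₁(ν; -y)`.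
lemma mul_normalizedBessel_add_two (hν : 0 < ν) (y : ℝ) :
    y * normalizedBessel (ν + 2) y =
      ν * (ν + 1) * (normalizedBessel (ν + 1) y - normalizedBessel ν y) := by
  have hν1 : 0 < ν + 1 := by linarith
  have hbound := norm_normalizedBesselCoeff_le hν1
  have heuler := ((summable_mul_pow_div_factorial hbound y).hasSum.mul_left ν).add
    (hasSum_natCast_mul_mul_pow_div_factorial hbound y)
  have hscaled :=
    (summable_mul_pow_div_factorial (norm_normalizedBesselCoeff_le hν) y).hasSum.mul_left ν
  have hsum : ν * normalizedBessel (ν + 1) y + y * -(normalizedBessel (ν + 1 + 1) y / (ν + 1)) =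
      ν * normalizedBessel ν y := by
    rw [← tsum_normalizedBesselCoeff_succ hν1.ne']
    refine heuler.unique (hscaled.congr_fun fun n ↦ ?_)
    linear_combination (y ^ n / n !) * add_mul_normalizedBesselCoeff_add_one hν n
  rw [add_assoc, one_add_one_eq_two] at hsum
  field_simp at hsum
  linear_combination -hsum

end NormalizedBessel

lemma antitoneOn_sonin {D : Set ℝ} (hD : Convex ℝ D) {u u' u'' r r' p : ℝ → ℝ}
    (hu : ∀ y ∈ D, HasDerivAt u (u' y) y) (hu' : ∀ y ∈ D, HasDerivAt u' (u'' y) y)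
    (hr : ∀ y ∈ D, HasDerivAt r (r' y) y) (hode : ∀ y ∈ D, r y * u'' y + p y * u' y + u y = 0)
    (hrp : ∀ y ∈ D, r' y ≤ 2 * p y) :
    AntitoneOn (fun y ↦ u y ^ 2 + r y * u' y ^ 2) D := by
  have hderiv : ∀ y ∈ D, HasDerivAt (fun y ↦ u y ^ 2 + r y * u' y ^ 2)
      ((r' y - 2 * p y) * u' y ^ 2) y := fun y hy ↦ by
    refine (((hu y hy).pow 2).add ((hr y hy).mul ((hu' y hy).pow 2))).congr_deriv ?_
    simp only [Pi.pow_apply]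
    linear_combination 2 * u' y * hode y hy
  refine antitoneOn_of_hasDerivWithinAt_nonpos hD
    (fun y hy ↦ (hderiv y hy).continuousAt.continuousWithinAt)
    (fun y hy ↦ (hderiv y (interior_subset hy)).hasDerivWithinAt) fun y hy ↦ ?_
  exact mul_nonpos_of_nonpos_of_nonneg (by linarith [hrp y (interior_subset hy)]) (sq_nonneg _)

section Bounds

variable {ν y : ℝ}

lemma abs_normalizedBessel_le_one (hν : 1 / 2 ≤ ν) (hy : 0 ≤ y) : |normalizedBessel ν y| ≤ 1 := by
  have hν0 : 0 < ν := by linarith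
  have hanti := antitoneOn_sonin (convex_Ici 0) (r := id) (p := fun _ ↦ ν)
    (fun s _ ↦ hasDerivAt_normalizedBessel hν0 s)
    (fun s _ ↦ ((hasDerivAt_normalizedBessel (by linarith : 0 < ν + 1) s).div_const ν).neg)
    (fun s _ ↦ hasDerivAt_id s)
    (fun s _ ↦ by
      have hcontig := mul_normalizedBessel_add_two hν0 s
      simp only [id_eq, add_assoc, one_add_one_eq_two]
      field_simp
      linear_combination hcontig)
    (fun s _ ↦ by linarith) self_mem_Ici hy hy
  simp only [id_eq, zero_mul, add_zero, normalizedBessel_zero hν0, one_pow] at hanti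
  refine (sq_le_one_iff_abs_le_one _).1 ?_
  linarith [mul_nonneg hy (sq_nonneg (-(normalizedBessel (ν + 1) y / ν)))]

lemma hasDerivAt_mul_normalizedBessel_add_two (hν : 0 < ν) (y : ℝ) :
    HasDerivAt (fun y ↦ y * normalizedBessel (ν + 2) y)
      ((ν + 1) * normalizedBessel (ν + 1) y - ν * normalizedBessel (ν + 2) y) y := by
  have hderiv := ((hasDerivAt_normalizedBessel (by linarith : 0 < ν + 1) y).sub
    (hasDerivAt_normalizedBessel hν y)).const_mul (ν * (ν + 1))
  simp only [add_assoc, one_add_one_eq_two] at hderiv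
  simp only [mul_normalizedBessel_add_two hν]
  refine hderiv.congr_deriv ?_
  field_simp
  ring

lemma antitoneOn_sonin_mul_normalizedBessel_add_two (hν : 1 / 2 ≤ ν) :
    AntitoneOn (fun y ↦ (y * normalizedBessel (ν + 2) y) ^ 2 + y ^ 2 / (y - ν) *
      ((ν + 1) * normalizedBessel (ν + 1) y - ν * normalizedBessel (ν + 2) y) ^ 2)
      (Ici (2 * ν)) := by
  have hν0 : 0 < ν := by linarith
  have hpos : ∀ s ∈ Ici (2 * ν), 0 < s - ν := fun s hs ↦ by linarith [mem_Ici.1 hs]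
  refine antitoneOn_sonin (convex_Ici _) (r' := fun s ↦ (2 * s * (s - ν) - s ^ 2) / (s - ν) ^ 2)
    (p := fun s ↦ ν * s / (s - ν))
    (fun s _ ↦ hasDerivAt_mul_normalizedBessel_add_two hν0 s)
    (fun s _ ↦ ((hasDerivAt_normalizedBessel (by linarith : 0 < ν + 1) s).const_mul (ν + 1)).sub
      ((hasDerivAt_normalizedBessel (by linarith : 0 < ν + 2) s).const_mul ν))
    (fun s hs ↦ ?_) (fun s hs ↦ ?_) fun s hs ↦ ?_
  · exact ((hasDerivAt_pow 2 s).div ((hasDerivAt_id s).sub_const ν) (hpos s hs).ne').congr_deriv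
      (by simp)
  · have hs := (hpos s hs).ne'
    have hcontig := mul_normalizedBessel_add_two (by linarith : 0 < ν + 1) s
    norm_num only [add_assoc] at hcontig ⊢
    field_simp
    linear_combination ν * s * hcontig
  · have hs0 : 0 < s := by linarith [hpos s hs]
    have hs := hpos s hs
    have hsharp : s - 2 * ν ≤ 2 * ν * (s - ν) := by nlinarith
    rw [← mul_div_assoc, div_le_div_iff₀ (by positivity) hs]
    calc (2 * s * (s - ν) - s ^ 2) * (s - ν) = (s - 2 * ν) * (s * (s - ν)) := by ring
      _ ≤ 2 * ν * (s - ν) * (s * (s - ν)) := by gcongr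
      _ = 2 * (ν * s) * (s - ν) ^ 2 := by ring

lemma abs_mul_normalizedBessel_le (hν : 1 / 2 ≤ ν) (hy : 0 ≤ y) :
    |y * normalizedBessel ν y| ≤ y := by
  rw [abs_mul, abs_of_nonneg hy]
  exact mul_le_of_le_one_right hy (abs_normalizedBessel_le_one hν hy)

lemma abs_add_one_mul_sub_mul_normalizedBessel_le (hν : 1 / 2 ≤ ν) (hy : 0 ≤ y) :
    |(ν + 1) * normalizedBessel (ν + 1) y - ν * normalizedBessel (ν + 2) y| ≤
      1 + y / (ν + 2) := by
  have hcontig := mul_normalizedBessel_add_two (by linarith : 0 < ν + 1) y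
  norm_num only [add_assoc] at hcontig
  have hν2 : 0 < ν + 2 := by linarith
  calc |(ν + 1) * normalizedBessel (ν + 1) y - ν * normalizedBessel (ν + 2) y|
      = |normalizedBessel (ν + 2) y - y * normalizedBessel (ν + 3) y / (ν + 2)| := by
        congr 1
        field_simp
        linear_combination hcontig
    _ ≤ |normalizedBessel (ν + 2) y| + |y * normalizedBessel (ν + 3) y / (ν + 2)| := abs_sub _ _
    _ ≤ 1 + y / (ν + 2) := by
        rw [abs_div, abs_of_pos hν2]
        gcongr
        · exact abs_normalizedBessel_le_one (by linarith) hy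
        · exact abs_mul_normalizedBessel_le (by linarith) hy

lemma abs_mul_normalizedBessel_add_two_le (hν : 1 / 2 ≤ ν) (hy : 0 ≤ y) :
    |y * normalizedBessel (ν + 2) y| ≤ 4 * (ν + 1) := by
  have hν0 : 0 < ν := by linarith
  have hνy : 0 ≤ 2 * ν := by linarith
  rcases le_total y (2 * ν) with hy2 | hy2
  · linarith [abs_mul_normalizedBessel_le (by linarith : 1 / 2 ≤ ν + 2) hy]
  have hvalue : (2 * ν * normalizedBessel (ν + 2) (2 * ν)) ^ 2 ≤ (2 * ν) ^ 2 :=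
    sq_le_sq.2 ((abs_mul_normalizedBessel_le (by linarith) hνy).trans (le_abs_self _))
  have hslope : |(ν + 1) * normalizedBessel (ν + 1) (2 * ν) -
      ν * normalizedBessel (ν + 2) (2 * ν)| ≤ 3 := by
    have hratio : 2 * ν / (ν + 2) ≤ 2 := by rw [div_le_iff₀ (by linarith)]; linarith
    linarith [abs_add_one_mul_sub_mul_normalizedBessel_le hν hνy]
  have hweight : (2 * ν) ^ 2 / (2 * ν - ν) = 4 * ν := by field_simp; ring
  have hanti := antitoneOn_sonin_mul_normalizedBessel_add_two hν self_mem_Ici hy2 hy2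
  simp only [hweight] at hanti
  have hyν : 0 < y - ν := by linarith
  refine abs_le_of_sq_le_sq ?_ (by positivity)
  calc (y * normalizedBessel (ν + 2) y) ^ 2
      ≤ _ := le_add_of_nonneg_right (by positivity)
    _ ≤ _ := hanti
    _ ≤ (2 * ν) ^ 2 + 4 * ν * 3 ^ 2 := by
        rw [← sq_abs (_ - _)]
        gcongr
    _ ≤ (4 * (ν + 1)) ^ 2 := by nlinarith

end Bounds

lemma norm_sub_exp_neg_smul_le {E : Type*} [NormedAddCommGroup E] [NormedSpace ℝ E]
    {f f' : ℝ → E} {c x : ℝ} (hx : 0 ≤ x) (hf : ∀ t ∈ Icc 0 x, HasDerivAt f (f' t) t)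
    (hc : ∀ t ∈ Icc 0 x, ‖f t + f' t‖ ≤ c) :
    ‖f x - Real.exp (-x) • f 0‖ ≤ c * (1 - Real.exp (-x)) := by
  have hderiv : ∀ t ∈ Icc 0 x,
      HasDerivAt (fun t ↦ Real.exp t • f t - f 0) (Real.exp t • (f t + f' t)) t := fun t ht ↦
    (((Real.hasDerivAt_exp t).smul (hf t ht)).sub_const _).congr_deriv (by module)
  have hfence : ‖Real.exp x • f x - f 0‖ ≤ c * (Real.exp x - 1) :=
    image_norm_le_of_norm_deriv_right_le_deriv_boundary (B := fun t ↦ c * (Real.exp t - 1))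
      (fun t ht ↦ (hderiv t ht).continuousAt.continuousWithinAt)
      (fun t ht ↦ (hderiv t (Ico_subset_Icc_self ht)).hasDerivWithinAt) (by simp)
      (fun t ↦ ((Real.hasDerivAt_exp t).sub_const 1).const_mul c)
      (fun t ht ↦ by
        rw [norm_smul, Real.norm_of_nonneg (Real.exp_pos t).le, mul_comm]
        gcongr
        exact hc t (Ico_subset_Icc_self ht))
      (right_mem_Icc.2 hx)
  have hexp : Real.exp (-x) * Real.exp x = 1 := by
    rw [← Real.exp_add, neg_add_cancel, Real.exp_zero]
  calc ‖f x - Real.exp (-x) • f 0‖ = ‖Real.exp (-x) • (Real.exp x • f x - f 0)‖ := by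
        rw [smul_sub, smul_smul, hexp, one_smul]
    _ = Real.exp (-x) * ‖Real.exp x • f x - f 0‖ := by
        rw [norm_smul, Real.norm_of_nonneg (Real.exp_pos _).le]
    _ ≤ Real.exp (-x) * (c * (Real.exp x - 1)) := by gcongr
    _ = c * (1 - Real.exp (-x)) := by linear_combination c * hexp

lemma abs_normalizedBessel_sub_normalizedBessel_add_one {ν y : ℝ} (hν : 0 < ν) :
    |normalizedBessel ν y - normalizedBessel (ν + 1) y| =
      |y * normalizedBessel (ν + 2) y| / (ν * (ν + 1)) := by
  have hpos : 0 < ν * (ν + 1) := by positivity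
  rw [mul_normalizedBessel_add_two hν, abs_mul, abs_of_pos hpos, mul_div_cancel_left₀ _ hpos.ne',
    abs_sub_comm]

lemma abs_normalizedBessel_mul_sub_exp_neg_le {ν x c : ℝ} (hν : 0 < ν) (hx : 0 ≤ x)
    (hc : ∀ t ∈ Icc 0 x, |ν * t * normalizedBessel (ν + 2) (ν * t)| ≤ (ν + 1) * c) :
    |normalizedBessel ν (ν * x) - Real.exp (-x)| ≤ c / ν * (1 - Real.exp (-x)) := by
  have hderiv (t : ℝ) :
      HasDerivAt (fun t ↦ normalizedBessel ν (ν * t)) (-normalizedBessel (ν + 1) (ν * t)) t :=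
    ((hasDerivAt_normalizedBessel hν (ν * t)).comp t
      ((hasDerivAt_id t).const_mul ν)).congr_deriv (by field_simp)
  have hdefect : ∀ t ∈ Icc 0 x,
      |normalizedBessel ν (ν * t) + -normalizedBessel (ν + 1) (ν * t)| ≤ c / ν := fun t ht ↦ by
    rw [← sub_eq_add_neg, abs_normalizedBessel_sub_normalizedBessel_add_one hν,
      div_le_div_iff₀ (by positivity) hν]
    linarith [mul_le_mul_of_nonneg_right (hc t ht) hν.le]
  simpa [normalizedBessel_zero hν] using
    norm_sub_exp_neg_smul_le hx (fun t _ ↦ hderiv t) hdefect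

theorem stmt_9_general {μ x : ℝ} (hμ : 1 / 2 ≤ μ) (hx : 0 ≤ x) :
    |besselJSmall (μ - 1) (2 * √(μ * x)) - Real.exp (-x)| ≤ 4 / μ * min 1 (x ^ 2) := by
  have hμ0 : 0 < μ := by linarith
  rw [besselJSmall_two_mul_sqrt _ (by positivity), sub_add_cancel,
    mul_min_of_nonneg _ _ (by positivity)]
  refine le_min ?_ ?_
  · calc |normalizedBessel μ (μ * x) - Real.exp (-x)| ≤ 4 / μ * (1 - Real.exp (-x)) :=
          abs_normalizedBessel_mul_sub_exp_neg_le hμ0 hx fun t ht ↦ by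
            have := abs_mul_normalizedBessel_add_two_le hμ (mul_nonneg hμ0.le ht.1)
            linarith
      _ ≤ 4 / μ * 1 := by gcongr; linarith [Real.exp_pos (-x)]
  · calc |normalizedBessel μ (μ * x) - Real.exp (-x)| ≤ x / μ * (1 - Real.exp (-x)) :=
          abs_normalizedBessel_mul_sub_exp_neg_le hμ0 hx fun t ht ↦ by
            calc _ ≤ μ * t :=
                  abs_mul_normalizedBessel_le (by linarith) (mul_nonneg hμ0.le ht.1)
              _ ≤ (μ + 1) * x := mul_le_mul (by linarith) ht.2 ht.1 (by linarith)
      _ ≤ x / μ * x := by gcongr; linarith [Real.one_sub_le_exp_neg x]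
      _ = 1 / μ * x ^ 2 := by ring
      _ ≤ 4 / μ * x ^ 2 := by gcongr; norm_num

theorem stmt_9 :
    ∃ C > 0, ∀ μ : ℝ, 3 < μ → ∀ x : ℝ, 0 ≤ x →
      |besselJSmall (μ - 1) (2 * Real.sqrt (μ * x)) - Real.exp (-x)| ≤
        C / μ * min 1 (x ^ 2) :=
  ⟨4, by norm_num, fun _ hμ _ hx ↦ stmt_9_general (by linarith) hx⟩
end

section
/- Let ν be a probability measure on Π_q (positive semidefinite q×q real symmetric matrices) with finite fourth moment ∫ ‖s‖⁴ dν(s) < ∞. Then ∫_{Π_q} e^{-tr(x s² x)} dν(s) = 1 - tr(x σ²(ν) x) + O(‖x‖⁴) as x → 0 in Π_q, where σ²(ν) = ∫ s² dν(s). -/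
open MeasureTheory Asymptotics

noncomputable instance {q : ℕ} : MeasurableSpace (Matrix (Fin q) (Fin q) ℝ) :=
  (inferInstance : MeasurableSpace ((Fin q) → (Fin q) → ℝ))

/-- The Frobenius (Hilbert–Schmidt) norm on matrices. -/
noncomputable instance {q : ℕ} : NormedAddCommGroup (Matrix (Fin q) (Fin q) ℝ) :=
  Matrix.frobeniusNormedAddCommGroup

noncomputable instance {q : ℕ} : NormedSpace ℝ (Matrix (Fin q) (Fin q) ℝ) :=
  Matrix.frobeniusNormedSpace

/-! Write the trace as a squared Frobenius norm: `tr (xᴴ s² x) = ‖s x‖²` for Hermitian `s`. Since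
`|exp (-t) - (1 - t)| ≤ t² / 2` for `t ≥ 0`, integrating at `t = ‖s x‖²` and using
`‖s x‖ ≤ ‖s‖ ‖x‖` bounds the error by `(∫ ‖s‖⁴ dν) / 2 * ‖x‖⁴`, for every `x`. -/

theorem abs_exp_neg_sub_one_sub_le {t : ℝ} (ht : 0 ≤ t) :
    |Real.exp (-t) - (1 - t)| ≤ t ^ 2 / 2 := by
  have lower : 1 - t ≤ Real.exp (-t) := Real.one_sub_le_exp_neg t
  have upper : Real.exp (-t) ≤ 1 - t + t ^ 2 / 2 := by
    have quadratic_pos : 0 < 1 - t + t ^ 2 / 2 := by nlinarith [sq_nonneg (t - 1)]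
    rw [Real.exp_neg, inv_le_iff_one_le_mul₀ (Real.exp_pos t)]
    calc
      1 ≤ 1 + t ^ 4 / 4 := by linarith [pow_nonneg ht 4]
      _ = (1 - t + t ^ 2 / 2) * (1 + t + t ^ 2 / 2) := by ring
      _ ≤ (1 - t + t ^ 2 / 2) * Real.exp t := by
        gcongr
        exact Real.quadratic_le_exp_of_nonneg ht
  rw [abs_of_nonneg (sub_nonneg.mpr lower)]
  linarith

section Integral

variable {Ω : Type*} [MeasurableSpace Ω] {μ : Measure Ω}

theorem integrable_exp_neg_of_nonneg [IsFiniteMeasure μ] {T : Ω → ℝ}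
    (hT : AEStronglyMeasurable T μ) (hT_nonneg : ∀ᵐ ω ∂μ, 0 ≤ T ω) :
    Integrable (fun ω => Real.exp (-T ω)) μ := by
  refine .of_bound (Real.continuous_exp.comp_aestronglyMeasurable hT.neg) 1 ?_
  filter_upwards [hT_nonneg] with ω hω
  simpa only [Real.norm_eq_abs, Real.abs_exp, Real.exp_le_one_iff, neg_nonpos] using hω

theorem abs_integral_exp_neg_sub_le [IsFiniteMeasure μ] {T : Ω → ℝ}
    (hT_nonneg : ∀ᵐ ω ∂μ, 0 ≤ T ω) (hT : Integrable T μ)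
    (hT_sq : Integrable (fun ω => T ω ^ 2) μ) :
    |∫ ω, Real.exp (-T ω) ∂μ - (μ.real Set.univ - ∫ ω, T ω ∂μ)| ≤ (∫ ω, T ω ^ 2 ∂μ) / 2 := by
  have hexp : Integrable (fun ω => Real.exp (-T ω)) μ :=
    integrable_exp_neg_of_nonneg hT.aestronglyMeasurable hT_nonneg
  have hlin : Integrable (fun ω => 1 - T ω) μ := (integrable_const 1).sub hT
  have integral_lin : ∫ ω, (1 - T ω) ∂μ = μ.real Set.univ - ∫ ω, T ω ∂μ := by
    rw [integral_sub (integrable_const 1) hT, integral_const, smul_eq_mul, mul_one]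
  rw [← integral_lin, ← integral_sub hexp hlin, ← integral_div, ← Real.norm_eq_abs]
  refine norm_integral_le_of_norm_le (hT_sq.div_const 2) ?_
  filter_upwards [hT_nonneg] with ω hω using abs_exp_neg_sub_one_sub_le hω

theorem abs_integral_exp_neg_norm_sq_sub_le [IsFiniteMeasure μ] {E : Type*} [NormedAddCommGroup E]
    {Y : Ω → E} (hY : AEStronglyMeasurable Y μ) (hmom : Integrable (fun ω => ‖Y ω‖ ^ 4) μ) :
    |∫ ω, Real.exp (-‖Y ω‖ ^ 2) ∂μ - (μ.real Set.univ - ∫ ω, ‖Y ω‖ ^ 2 ∂μ)| ≤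
      (∫ ω, ‖Y ω‖ ^ 4 ∂μ) / 2 := by
  have hmom₂ : Integrable (fun ω => ‖Y ω‖ ^ 2) μ :=
    integrable_norm_pow_of_le hY (by decide) hmom
  have sq_sq (ω : Ω) : ‖Y ω‖ ^ 4 = (‖Y ω‖ ^ 2) ^ 2 := by rw [← pow_mul]
  simp only [sq_sq] at hmom ⊢
  exact abs_integral_exp_neg_sub_le (.of_forall fun ω => sq_nonneg ‖Y ω‖) hmom₂ hmom

theorem integral_linearMap_comp {E F : Type*} [NormedAddCommGroup E] [NormedSpace ℝ E]
    [FiniteDimensional ℝ E] [NormedAddCommGroup F] [NormedSpace ℝ F] [CompleteSpace F] {f : Ω → E}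
    (hf : Integrable f μ) (L : E →ₗ[ℝ] F) : ∫ ω, L (f ω) ∂μ = L (∫ ω, f ω ∂μ) :=
  have := FiniteDimensional.complete ℝ E
  L.toContinuousLinearMap.integral_comp_comm hf

end Integral

section RandomMatrix

open Matrix RCLike
open scoped Matrix.Norms.Frobenius

variable {Ω m n 𝕜 : Type*} [Fintype m] [Fintype n] [RCLike 𝕜]

theorem re_trace_conjTranspose_mul_self_eq_norm_sq (A : Matrix m n 𝕜) :
    re (Aᴴ * A).trace = ‖A‖ ^ 2 := by
  rw [frobenius_norm_def, ← Real.sqrt_eq_rpow, Real.sq_sqrt (by positivity), Finset.sum_comm]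
  simp only [trace, diag_apply, mul_apply, conjTranspose_apply, map_sum, star_def, RCLike.conj_mul,
    Real.rpow_two, ← ofReal_pow, ofReal_re]

theorem re_trace_conjTranspose_mul_sq_mul_eq_norm_sq [DecidableEq n] {s : Matrix n n 𝕜}
    (hs : s.IsHermitian) (x : Matrix n m 𝕜) : re (xᴴ * s ^ 2 * x).trace = ‖s * x‖ ^ 2 := by
  rw [← re_trace_conjTranspose_mul_self_eq_norm_sq, conjTranspose_mul, hs.eq, sq]
  simp only [Matrix.mul_assoc]

variable [MeasurableSpace Ω] {μ : Measure Ω}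

-- `Integrable A μ` is split in two because the default topology on matrices is not reducibly equal
-- to that of the Frobenius norm.
theorem integral_re_trace_mul_mul {A : Ω → Matrix n n 𝕜} (hA : AEStronglyMeasurable A μ)
    (hA_norm : Integrable (fun ω => ‖A ω‖) μ) (x : Matrix m n 𝕜) (y : Matrix n m 𝕜) :
    ∫ ω, re (x * A ω * y).trace ∂μ = re (x * (∫ ω, A ω ∂μ) * y).trace := by
  simp only [trace_mul_cycle x _ y]
  exact integral_linearMap_comp ((integrable_norm_iff hA).mp hA_norm)
    (reLm ∘ₗ traceLinearMap n ℝ 𝕜 ∘ₗ LinearMap.mulLeft ℝ (y * x))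

theorem stmt_14_general [DecidableEq n] [IsFiniteMeasure μ] {S : Ω → Matrix n n 𝕜}
    (hS : AEStronglyMeasurable S μ) (hS_herm : ∀ᵐ ω ∂μ, (S ω).IsHermitian)
    (hmom : Integrable (fun ω => ‖S ω‖ ^ 4) μ) (x : Matrix n m 𝕜) :
    |∫ ω, Real.exp (-re (xᴴ * S ω ^ 2 * x).trace) ∂μ -
        (μ.real Set.univ - re (xᴴ * (∫ ω, S ω ^ 2 ∂μ) * x).trace)| ≤
      (∫ ω, ‖S ω‖ ^ 4 ∂μ) / 2 * ‖x‖ ^ 4 := by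
  have trace_eq : ∀ᵐ ω ∂μ, re (xᴴ * S ω ^ 2 * x).trace = ‖S ω * x‖ ^ 2 :=
    hS_herm.mono fun ω hω => re_trace_conjTranspose_mul_sq_mul_eq_norm_sq hω x
  have hsq_norm : Integrable (fun ω => ‖S ω ^ 2‖) μ :=
    (integrable_norm_pow_of_le hS (by decide : 2 ≤ 4) hmom).mono' (hS.pow 2).norm
      (.of_forall fun ω => by simpa only [norm_norm] using norm_pow_le' (S ω) two_pos)
  have norm_mul_pow_le (ω : Ω) : ‖S ω * x‖ ^ 4 ≤ ‖S ω‖ ^ 4 * ‖x‖ ^ 4 := by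
    rw [← mul_pow]
    gcongr
    exact frobenius_norm_mul (S ω) x
  have hSx : AEStronglyMeasurable (fun ω => S ω * x) μ :=
    (by fun_prop : Continuous fun s : Matrix n n 𝕜 => s * x).comp_aestronglyMeasurable hS
  have hSx_mom : Integrable (fun ω => ‖S ω * x‖ ^ 4) μ :=
    (hmom.mul_const (‖x‖ ^ 4)).mono' (hSx.norm.pow 4)
      (.of_forall fun ω => by simpa only [norm_pow, norm_norm] using norm_mul_pow_le ω)
  rw [← integral_re_trace_mul_mul (A := fun ω => S ω ^ 2) (hS.pow 2) hsq_norm,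
    integral_congr_ae trace_eq, integral_congr_ae (trace_eq.mono fun ω hω => by rw [hω])]
  calc
    _ ≤ (∫ ω, ‖S ω * x‖ ^ 4 ∂μ) / 2 := abs_integral_exp_neg_norm_sq_sub_le hSx hSx_mom
    _ ≤ (∫ ω, ‖S ω‖ ^ 4 * ‖x‖ ^ 4 ∂μ) / 2 :=
      div_le_div_of_nonneg_right
        (integral_mono hSx_mom (hmom.mul_const _) norm_mul_pow_le) zero_le_two
    _ = (∫ ω, ‖S ω‖ ^ 4 ∂μ) / 2 * ‖x‖ ^ 4 := by rw [integral_mul_const, div_mul_eq_mul_div]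

end RandomMatrix

theorem stmt_14 (q : ℕ) (ν : Measure (Matrix (Fin q) (Fin q) ℝ)) [IsProbabilityMeasure ν]
    (hsupp : ∀ᵐ s ∂ν, s.PosSemidef)
    (hmom : Integrable (fun s => ‖s‖ ^ 4) ν)
    (σ2 : Matrix (Fin q) (Fin q) ℝ) (hσ2 : σ2 = ∫ s, s ^ 2 ∂ν) :
    (fun x : Matrix (Fin q) (Fin q) ℝ =>
        (∫ s, Real.exp (-(Matrix.trace (x * s ^ 2 * x))) ∂ν) -
          (1 - Matrix.trace (x * σ2 * x)))
      =O[nhdsWithin 0 {x : Matrix (Fin q) (Fin q) ℝ | x.PosSemidef}]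
      (fun x => ‖x‖ ^ 4) := by
  have hid : AEStronglyMeasurable (fun s : Matrix (Fin q) (Fin q) ℝ => s) ν :=
    aestronglyMeasurable_id (α := Fin q → Fin q → ℝ)
  have hherm : ∀ᵐ s ∂ν, s.IsHermitian := hsupp.mono fun _ hs => hs.isHermitian
  refine .of_bound ((∫ s, ‖s‖ ^ 4 ∂ν) / 2) ?_
  filter_upwards [self_mem_nhdsWithin] with x (hx : x.PosSemidef)
  have bound := stmt_14_general hid hherm hmom x
  rw [hx.isHermitian.eq, ← hσ2, probReal_univ] at bound
  simpa using bound
end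

section
/- Let ν be a probability measure on [0,∞) with finite second moment σ² = ∫ s² dν(s) ∈ (0,∞), and let (μ_k) ⊂ (1/2,∞) with μ_k → ∞. For each k let S_k be distributed according to the k-fold convolution power ν^{(k,μ_k)} of ν under the Bessel–Kingman convolution of index μ_k on [0,∞) (i.e. the hypergroup convolution whose characters are s ↦ j_{μ_k-1}(st)). Then S_k/√k → σ in probability as k → ∞. -/
open MeasureTheory

/-- The normalization constant `κ_μ = ∫_{-1}^1 (1 - v²)^{μ - 3/2} dv`. -/
noncomputable def kappaConst (μ : ℝ) : ℝ :=
  ∫ v in (-1 : ℝ)..1, (1 - v ^ 2) ^ (μ - 3 / 2)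

/-- The Bessel–Kingman convolution of two point measures `δ_r *_μ δ_s`, given by
`(δ_r *_μ δ_s)(f) = (1/κ_μ) ∫_{-1}^1 f(√(r² + s² + 2rsv)) (1-v²)^{μ-3/2} dv`. -/
noncomputable def kingmanPointConv (μ r s : ℝ) : Measure ℝ :=
  Measure.map (fun v => Real.sqrt (r ^ 2 + s ^ 2 + 2 * r * s * v))
    ((ENNReal.ofReal (kappaConst μ)⁻¹) •
      ((volume.restrict (Set.Ioo (-1 : ℝ) 1)).withDensity
        (fun v => ENNReal.ofReal ((1 - v ^ 2) ^ (μ - 3 / 2)))))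

/-- One convolution step: `P ↦ P *_μ ν`. -/
noncomputable def kingmanConvStep (μ : ℝ) (ν P : Measure ℝ) : Measure ℝ :=
  P.bind fun r => ν.bind fun s => kingmanPointConv μ r s

/-- The `k`-fold Bessel–Kingman convolution power `ν^{(k,μ)}` of `ν`,
i.e. the distribution of the `k`-th step `S_k` of the Bessel–Kingman random
walk of index `μ` with law `ν`, started at `0`. -/
noncomputable def kingmanConvPower (μ : ℝ) (ν : Measure ℝ) (k : ℕ) : Measure ℝ :=
  (kingmanConvStep μ ν)^[k] (Measure.dirac 0)

/-!
Adding a step of length `X` at an angle of cosine `V` to a vector of length `S` gives the squared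
length `S² + X² + 2 S X V`. The cosines are centered and independent of the past and of the steps,
so the squared length of the walk minus the sum of the squared step lengths is a martingale. Its
second moment at time `n` is `n (n - 1) m² / μ`, where `m` is the second moment of a step, because
a cosine has second moment `1 / (2 μ)`. This is `o(n²)` when `μ → ∞`, so by Chebyshev's inequality
the squared length divided by `n` has the same limit as the average of the squared step lengths,
which converges to `m` by the law of large numbers.
-/

open ProbabilityTheory Filter Set
open scoped Topology

section CosineLaw

/-- The density factor of the point convolution as a law on `[-1, 1]`. When two steps of a
rotation-invariant walk in dimension `2μ` are added, this is the law of the cosine of the angle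
between them. -/
noncomputable def kingmanCosineLaw (μ : ℝ) : Measure ℝ :=
  ENNReal.ofReal (kappaConst μ)⁻¹ •
    (volume.restrict (Ioo (-1 : ℝ) 1)).withDensity
      fun v => ENNReal.ofReal ((1 - v ^ 2) ^ (μ - 3 / 2))

lemma one_sub_sq_pos_of_mem_Ioo {v : ℝ} (hv : v ∈ Ioo (-1 : ℝ) 1) : 0 < 1 - v ^ 2 := by
  nlinarith [hv.1, hv.2]

lemma intervalIntegrable_one_sub_sq_rpow {a : ℝ} (ha : -1 < a) :
    IntervalIntegrable (fun v : ℝ => (1 - v ^ 2) ^ a) volume (-1) 1 := by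
  have right_half : IntervalIntegrable (fun v : ℝ => (1 - v ^ 2) ^ a) volume 0 1 := by
    have hsing : IntervalIntegrable (fun v : ℝ => (1 - v) ^ a) volume 0 1 := by
      simpa using ((intervalIntegral.intervalIntegrable_rpow' ha (a := 0) (b := 1)).comp_sub_left
        1).symm
    have hreg : ContinuousOn (fun v : ℝ => (1 + v) ^ a) (uIcc 0 1) := by
      refine ContinuousOn.rpow_const (by fun_prop) fun v hv => Or.inl ?_
      rw [uIcc_of_le zero_le_one] at hv
      linarith [hv.1]
    refine (hsing.mul_continuousOn hreg).congr fun v hv => ?_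
    rw [uIoc_of_le zero_le_one] at hv
    change (1 - v) ^ a * (1 + v) ^ a = _
    rw [← Real.mul_rpow (by linarith [hv.2]) (by linarith [hv.1])]
    ring_nf
  refine IntervalIntegrable.trans (b := 0) ?_ right_half
  simpa using (right_half.comp_sub_left 0).symm

lemma kappaConst_nonneg (μ : ℝ) : 0 ≤ kappaConst μ := by
  refine intervalIntegral.integral_nonneg (by norm_num) fun v hv => Real.rpow_nonneg ?_ _
  nlinarith [hv.1, hv.2]

lemma kappaConst_pos {μ : ℝ} (hμ : 1 / 2 < μ) : 0 < kappaConst μ :=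
  intervalIntegral.intervalIntegral_pos_of_pos_on
    (intervalIntegrable_one_sub_sq_rpow (by linarith))
    (fun _ hv => Real.rpow_pos_of_pos (one_sub_sq_pos_of_mem_Ioo hv) _) (by norm_num)

lemma integral_kingmanCosineLaw {E : Type*} [NormedAddCommGroup E] [NormedSpace ℝ E]
    (μ : ℝ) (f : ℝ → E) :
    ∫ v, f v ∂kingmanCosineLaw μ =
      (kappaConst μ)⁻¹ • ∫ v in (-1 : ℝ)..1, (1 - v ^ 2) ^ (μ - 3 / 2) • f v := by
  rw [kingmanCosineLaw, integral_smul_measure,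
    ENNReal.toReal_ofReal (inv_nonneg.2 (kappaConst_nonneg μ)),
    integral_withDensity_eq_integral_toReal_smul (by fun_prop) (by simp),
    intervalIntegral.integral_of_le (by norm_num), integral_Ioc_eq_integral_Ioo]
  congr 1
  refine setIntegral_congr_fun measurableSet_Ioo fun v hv => ?_
  rw [ENNReal.toReal_ofReal (Real.rpow_nonneg (one_sub_sq_pos_of_mem_Ioo hv).le _)]

lemma isProbabilityMeasure_kingmanCosineLaw {μ : ℝ} (hμ : 1 / 2 < μ) :
    IsProbabilityMeasure (kingmanCosineLaw μ) := by
  have total_mass : ∫ _, (1 : ℝ) ∂kingmanCosineLaw μ = 1 := by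
    simp only [integral_kingmanCosineLaw, smul_eq_mul, mul_one]
    exact inv_mul_cancel₀ (kappaConst_pos hμ).ne'
  rw [isProbabilityMeasure_iff_real]
  simpa only [integral_const, smul_eq_mul, mul_one] using total_mass

lemma ae_abs_le_one_kingmanCosineLaw (μ : ℝ) : ∀ᵐ v ∂kingmanCosineLaw μ, |v| ≤ 1 := by
  refine Measure.ae_smul_measure ((withDensity_absolutelyContinuous _ _).ae_le ?_) _
  filter_upwards [ae_restrict_mem measurableSet_Ioo] with v hv
  exact abs_le.2 ⟨hv.1.le, hv.2.le⟩

lemma integral_id_kingmanCosineLaw (μ : ℝ) : ∫ v, v ∂kingmanCosineLaw μ = 0 := by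
  have odd := intervalIntegral.integral_comp_neg (a := -1) (b := 1)
    fun v : ℝ => (1 - v ^ 2) ^ (μ - 3 / 2) * v
  simp only [neg_neg, neg_sq, mul_neg, intervalIntegral.integral_neg] at odd
  simp only [integral_kingmanCosineLaw, smul_eq_mul, mul_eq_zero]
  right
  linarith

/-- Integration by parts: the boundary terms of `v (1 - v²)^(a + 1)` vanish. -/
lemma integral_one_sub_sq_rpow_mul_sq {a : ℝ} (ha : -1 < a) :
    (2 * a + 3) * ∫ v in (-1 : ℝ)..1, (1 - v ^ 2) ^ a * v ^ 2 =
      ∫ v in (-1 : ℝ)..1, (1 - v ^ 2) ^ a := by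
  have hint := intervalIntegrable_one_sub_sq_rpow ha
  have hint_sq : IntervalIntegrable (fun v : ℝ => (1 - v ^ 2) ^ a * v ^ 2) volume (-1) 1 :=
    hint.mul_continuousOn (by fun_prop)
  have hcont : Continuous fun v : ℝ => v * (1 - v ^ 2) ^ (a + 1) :=
    continuous_id.mul (Continuous.rpow_const (by fun_prop) fun _ => Or.inr (by linarith))
  have hderiv : ∀ v ∈ Ioo (-1 : ℝ) 1, HasDerivAt (fun v : ℝ => v * (1 - v ^ 2) ^ (a + 1))
      ((1 - v ^ 2) ^ a - (2 * a + 3) * ((1 - v ^ 2) ^ a * v ^ 2)) v := by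
    intro v hv
    have hbase := one_sub_sq_pos_of_mem_Ioo hv
    have hinner : HasDerivAt (fun v : ℝ => 1 - v ^ 2) (-(2 * v)) v := by
      simpa using (hasDerivAt_pow 2 v).const_sub 1
    refine ((hasDerivAt_id v).mul
      (hinner.rpow_const (p := a + 1) (Or.inl hbase.ne'))).congr_deriv ?_
    simp only [id, add_sub_cancel_right, Real.rpow_add_one hbase.ne']
    ring
  have ftc := intervalIntegral.integral_eq_sub_of_hasDerivAt_of_le (by norm_num)
    hcont.continuousOn hderiv (hint.sub (hint_sq.const_mul _))
  rw [intervalIntegral.integral_sub hint (hint_sq.const_mul _),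
    intervalIntegral.integral_const_mul] at ftc
  have boundary : (0 : ℝ) ^ (a + 1) = 0 := Real.zero_rpow (by linarith)
  norm_num [boundary] at ftc
  linarith

lemma integral_sq_kingmanCosineLaw {μ : ℝ} (hμ : 1 / 2 < μ) :
    ∫ v, v ^ 2 ∂kingmanCosineLaw μ = 1 / (2 * μ) := by
  have hκ := kappaConst_pos hμ
  have parts := integral_one_sub_sq_rpow_mul_sq (a := μ - 3 / 2) (by linarith)
  rw [← kappaConst, show 2 * (μ - 3 / 2) + 3 = 2 * μ by ring] at parts
  simp only [integral_kingmanCosineLaw, smul_eq_mul]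
  rw [inv_mul_eq_div, div_eq_div_iff hκ.ne' (by linarith)]
  linarith

end CosineLaw

section IndependentMoments

variable {Ω : Type*} [MeasurableSpace Ω] {P : Measure Ω} {A B Y : Ω → ℝ}

lemma memLp_two_mul_of_indepFun (hB : MemLp B 2 P) (hY : MemLp Y 2 P) (hBY : B ⟂ᵢ[P] Y) :
    MemLp (B * Y) 2 P := by
  rw [memLp_two_iff_integrable_sq (hB.aestronglyMeasurable.mul hY.aestronglyMeasurable)]
  simpa only [Pi.mul_apply, mul_pow] using!
    (hBY.comp (measurable_id.pow_const 2) (measurable_id.pow_const 2)).integrable_mul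
      hB.integrable_sq hY.integrable_sq

lemma integral_mul_eq_zero_of_indepFun (hA : AEStronglyMeasurable A P)
    (hY : AEStronglyMeasurable Y P) (hAY : A ⟂ᵢ[P] Y) (hY0 : ∫ ω, Y ω ∂P = 0) :
    ∫ ω, A ω * Y ω ∂P = 0 := by
  rw [hAY.integral_fun_mul_eq_mul_integral hA hY, hY0, mul_zero]

lemma integral_sq_add_mul_of_indepFun (hA : MemLp A 2 P) (hB : MemLp B 2 P) (hY : MemLp Y 2 P)
    (hABY : (fun ω => (A ω, B ω)) ⟂ᵢ[P] Y) (hY0 : ∫ ω, Y ω ∂P = 0) :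
    ∫ ω, (A ω + B ω * Y ω) ^ 2 ∂P = ∫ ω, A ω ^ 2 ∂P + (∫ ω, B ω ^ 2 ∂P) * ∫ ω, Y ω ^ 2 ∂P := by
  have hBY : B ⟂ᵢ[P] Y := hABY.comp measurable_snd measurable_id
  have hBY_memLp := memLp_two_mul_of_indepFun hB hY hBY
  have cross : ∫ ω, A ω * (B ω * Y ω) ∂P = 0 := by
    simp only [← mul_assoc]
    exact integral_mul_eq_zero_of_indepFun (hA.aestronglyMeasurable.mul hB.aestronglyMeasurable)
      hY.aestronglyMeasurable (hABY.comp (measurable_fst.mul measurable_snd) measurable_id) hY0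
  have diagonal : ∫ ω, (B ω * Y ω) ^ 2 ∂P = (∫ ω, B ω ^ 2 ∂P) * ∫ ω, Y ω ^ 2 ∂P := by
    simp only [mul_pow]
    exact (hBY.comp (measurable_id.pow_const 2)
      (measurable_id.pow_const 2)).integral_fun_mul_eq_mul_integral
      (hB.aestronglyMeasurable.pow 2) (hY.aestronglyMeasurable.pow 2)
  calc ∫ ω, (A ω + B ω * Y ω) ^ 2 ∂P
      = ∫ ω, (A ω ^ 2 + 2 * (A ω * (B ω * Y ω)) + (B ω * Y ω) ^ 2) ∂P := by
        congr with ω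
        ring
    _ = ∫ ω, A ω ^ 2 ∂P + 2 * ∫ ω, A ω * (B ω * Y ω) ∂P + ∫ ω, (B ω * Y ω) ^ 2 ∂P := by
        have hcross : Integrable (fun ω => 2 * (A ω * (B ω * Y ω))) P :=
          (hA.integrable_mul hBY_memLp).const_mul 2
        have hdiag : Integrable (fun ω => (B ω * Y ω) ^ 2) P := hBY_memLp.integrable_sq
        rw [integral_add (by exact hA.integrable_sq.add hcross) hdiag,
          integral_add hA.integrable_sq hcross, integral_const_mul]
    _ = ∫ ω, A ω ^ 2 ∂P + (∫ ω, B ω ^ 2 ∂P) * ∫ ω, Y ω ^ 2 ∂P := by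
        rw [cross, diagonal, mul_zero, add_zero]

lemma measure_le_abs_le_integral_sq_div_sq [IsFiniteMeasure P] (hA : MemLp A 2 P) {c : ℝ}
    (hc : 0 < c) : P {ω | c ≤ |A ω|} ≤ ENNReal.ofReal ((∫ ω, A ω ^ 2 ∂P) / c ^ 2) := by
  have markov := mul_meas_ge_le_integral_of_nonneg
    (ae_of_all P fun ω => sq_nonneg (A ω)) hA.integrable_sq (c ^ 2)
  simp only [sq_le_sq, abs_of_pos hc] at markov
  rw [← ofReal_measureReal]
  exact ENNReal.ofReal_le_ofReal ((le_div_iff₀' (by positivity)).2 markov)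

end IndependentMoments

section IidSequences

variable {E : Type*} [MeasurableSpace E]

/-- The law of a sequence of independent random variables with common law `ρ`. -/
noncomputable abbrev iidLaw (ρ : Measure E) : Measure (ℕ → E) :=
  Measure.infinitePi fun _ => ρ

lemma indepFun_eval_of_dependsOn {ι F : Type*} {X : ι → Type*} [∀ i, MeasurableSpace (X i)]
    [MeasurableSpace F] {ρ : (i : ι) → Measure (X i)} [∀ i, IsProbabilityMeasure (ρ i)]
    {s : Finset ι} {i : ι} (hi : i ∉ s) {g : ((i : ι) → X i) → F} (hg : Measurable g)
    (hdep : DependsOn g s) : g ⟂ᵢ[Measure.infinitePi ρ] (fun ω => ω i) := by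
  classical
  obtain ⟨ω₀⟩ := (Measure.infinitePi ρ).nonempty_of_neZero
  have factorization :
      g = (fun x => g (Function.updateFinset ω₀ s x)) ∘ fun ω (j : s) => ω j := by
    ext ω
    exact hdep fun j hj => by simp [Function.updateFinset, Finset.mem_coe.1 hj]
  have blocks := (iIndepFun_infinitePi (P := ρ) (X := fun _ x => x)
    fun _ => measurable_id).indepFun_finset s {i} (Finset.disjoint_singleton_right.2 hi)
      fun j => measurable_pi_apply j
  rw [factorization]
  exact blocks.comp (hg.comp measurable_updateFinset)
    (measurable_pi_apply (⟨i, Finset.mem_singleton_self i⟩ : ({i} : Finset ι)))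

lemma integral_eval_iidLaw (ρ : Measure E) [IsProbabilityMeasure ρ] {f : E → ℝ}
    (hf : AEStronglyMeasurable f ρ) (n : ℕ) : ∫ ω, f (ω n) ∂iidLaw ρ = ∫ x, f x ∂ρ := by
  have heval := measurePreserving_eval_infinitePi (fun _ : ℕ => ρ) n
  conv_rhs => rw [← heval.map_eq]
  exact (integral_map heval.aemeasurable (by rwa [heval.map_eq])).symm

lemma tendsto_measure_average_deviation_iidLaw {ρ : Measure E} [IsProbabilityMeasure ρ] {f : E → ℝ}
    (hf : Measurable f) (hint : Integrable f ρ) {δ : ℝ} (hδ : 0 < δ) :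
    Tendsto (fun n : ℕ => iidLaw ρ {ω | δ ≤ |(∑ i ∈ Finset.range n, f (ω i)) / n - ∫ x, f x ∂ρ|})
      atTop (𝓝 0) := by
  have heval (i : ℕ) := measurePreserving_eval_infinitePi (fun _ : ℕ => ρ) i
  have hident (i : ℕ) : IdentDistrib (Function.eval i) (Function.eval 0) (iidLaw ρ) (iidLaw ρ) :=
    ⟨(heval i).aemeasurable, (heval 0).aemeasurable, (heval i).map_eq.trans (heval 0).map_eq.symm⟩
  have hindep := iIndepFun_infinitePi (P := fun _ : ℕ => ρ) (X := fun _ => f) fun _ => hf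
  have strong_law := strong_law_ae_real (fun i (ω : ℕ → E) => f (ω i))
    ((heval 0).integrable_comp_of_integrable hint) (fun _ _ hij => hindep.indepFun hij)
    fun i => (hident i).comp hf
  rw [integral_eval_iidLaw ρ hf.aestronglyMeasurable 0] at strong_law
  have hmeas (n : ℕ) : AEStronglyMeasurable
      (fun ω : ℕ → E => (∑ i ∈ Finset.range n, f (ω i)) / n) (iidLaw ρ) :=
    Measurable.aestronglyMeasurable (by fun_prop)
  simpa only [Real.norm_eq_abs] using tendstoInMeasure_iff_norm.1
    (tendstoInMeasure_of_tendsto_ae hmeas strong_law) δ hδ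

lemma map_fst_iidLaw_prod {F : Type*} [MeasurableSpace F] (ρ : Measure E) (β : Measure F)
    [IsProbabilityMeasure ρ] [IsProbabilityMeasure β] :
    (iidLaw (ρ.prod β)).map (fun ω i => (ω i).1) = iidLaw ρ := by
  rw [Measure.infinitePi_map_pi _ fun _ => measurable_fst]
  simp

end IidSequences

section Walk

/-- The length of the sum of two vectors of lengths `r` and `s` whose angle has cosine `v`. -/
noncomputable def kingmanRadius (r s v : ℝ) : ℝ := √(r ^ 2 + s ^ 2 + 2 * r * s * v)

lemma measurable_kingmanRadius : Measurable fun p : ℝ × ℝ × ℝ => kingmanRadius p.1 p.2.1 p.2.2 := by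
  unfold kingmanRadius
  fun_prop

lemma kingmanRadius_sq (r s : ℝ) {v : ℝ} (hv : |v| ≤ 1) :
    kingmanRadius r s v ^ 2 = r ^ 2 + s ^ 2 + 2 * r * s * v := by
  obtain ⟨hv₁, hv₂⟩ := abs_le.1 hv
  refine Real.sq_sqrt ?_
  nlinarith [mul_nonneg (sub_nonneg.2 hv₂) (sq_nonneg (r - s)),
    mul_nonneg (by linarith : 0 ≤ 1 + v) (sq_nonneg (r + s))]

lemma kingmanRadius_le (r s : ℝ) {v : ℝ} (hv : |v| ≤ 1) : kingmanRadius r s v ≤ |r| + |s| := by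
  have cosine_rule : r * s * v ≤ |r| * |s| := by
    calc r * s * v ≤ |r * s * v| := le_abs_self _
      _ = |r| * |s| * |v| := by rw [abs_mul, abs_mul]
      _ ≤ |r| * |s| := mul_le_of_le_one_right (by positivity) hv
  refine Real.sqrt_le_iff.2 ⟨by positivity, ?_⟩
  nlinarith [sq_abs r, sq_abs s]

/-- The Bessel–Kingman walk from `0`, driven by the pairs `ω n = (step length, cosine)`. -/
noncomputable def kingmanWalk : ℕ → (ℕ → ℝ × ℝ) → ℝ
  | 0, _ => 0
  | n + 1, ω => kingmanRadius (kingmanWalk n ω) (ω n).1 (ω n).2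

/-- The difference between the squared radius of the walk and the sum of its squared step lengths,
a martingale when the cosines are centered. -/
noncomputable def kingmanDefect (n : ℕ) (ω : ℕ → ℝ × ℝ) : ℝ :=
  kingmanWalk n ω ^ 2 - ∑ i ∈ Finset.range n, (ω i).1 ^ 2

lemma kingmanWalk_nonneg (n : ℕ) (ω : ℕ → ℝ × ℝ) : 0 ≤ kingmanWalk n ω := by
  cases n with
  | zero => exact le_rfl
  | succ n => exact Real.sqrt_nonneg _

@[fun_prop]
lemma measurable_kingmanWalk (n : ℕ) : Measurable (kingmanWalk n) := by
  induction n with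
  | zero => exact measurable_const
  | succ n ih => exact measurable_kingmanRadius.comp (ih.prodMk (measurable_pi_apply n))

@[fun_prop]
lemma measurable_kingmanDefect (n : ℕ) : Measurable (kingmanDefect n) := by
  unfold kingmanDefect
  fun_prop

lemma dependsOn_kingmanWalk (n : ℕ) : DependsOn (kingmanWalk n) (Finset.range n) := by
  induction n with
  | zero => exact fun _ _ _ => rfl
  | succ n ih =>
    intro ω ω' h
    have past : kingmanWalk n ω = kingmanWalk n ω' := ih fun i hi =>
      h i (Finset.range_mono n.le_succ hi)
    simp only [kingmanWalk, past, h n (by simp)]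

lemma dependsOn_kingmanDefect (n : ℕ) : DependsOn (kingmanDefect n) (Finset.range n) := by
  intro ω ω' h
  simp only [kingmanDefect, dependsOn_kingmanWalk n h]
  congr 1
  exact Finset.sum_congr rfl fun i hi => by rw [h i hi]

variable {ρ : Measure (ℝ × ℝ)}

lemma memLp_fst_mul_snd {p : ENNReal} (hcos : ∀ᵐ z ∂ρ, |z.2| ≤ 1) (hstep : MemLp Prod.fst p ρ) :
    MemLp (fun z => z.1 * z.2) p ρ := by
  refine hstep.mono (by fun_prop) ?_
  filter_upwards [hcos] with z hz
  rw [norm_mul]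
  exact mul_le_of_le_one_right (norm_nonneg _) hz

variable [IsProbabilityMeasure ρ]

lemma indepFun_kingmanWalk (n : ℕ) : kingmanWalk n ⟂ᵢ[iidLaw ρ] (fun ω => ω n) :=
  indepFun_eval_of_dependsOn Finset.notMem_range_self (measurable_kingmanWalk n)
    (dependsOn_kingmanWalk n)

lemma indepFun_kingmanDefect_kingmanWalk (n : ℕ) :
    (fun ω => (kingmanDefect n ω, kingmanWalk n ω)) ⟂ᵢ[iidLaw ρ] (fun ω => ω n) :=
  indepFun_eval_of_dependsOn Finset.notMem_range_self
    ((measurable_kingmanDefect n).prodMk (measurable_kingmanWalk n)) fun _ _ h =>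
      Prod.ext (dependsOn_kingmanDefect n h) (dependsOn_kingmanWalk n h)

lemma ae_kingmanWalk_succ_sq (hcos : ∀ᵐ z ∂ρ, |z.2| ≤ 1) (n : ℕ) :
    ∀ᵐ ω ∂iidLaw ρ, kingmanWalk (n + 1) ω ^ 2 =
      kingmanWalk n ω ^ 2 + (ω n).1 ^ 2 + 2 * (kingmanWalk n ω * ((ω n).1 * (ω n).2)) := by
  have heval := measurePreserving_eval_infinitePi (fun _ : ℕ => ρ) n
  filter_upwards [heval.quasiMeasurePreserving.ae hcos] with ω hω
  rw [kingmanWalk, kingmanRadius_sq _ _ hω]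
  ring

lemma ae_kingmanDefect_succ (hcos : ∀ᵐ z ∂ρ, |z.2| ≤ 1) (n : ℕ) :
    ∀ᵐ ω ∂iidLaw ρ, kingmanDefect (n + 1) ω =
      kingmanDefect n ω + kingmanWalk n ω * (2 * ((ω n).1 * (ω n).2)) := by
  filter_upwards [ae_kingmanWalk_succ_sq hcos n] with ω hω
  rw [kingmanDefect, kingmanDefect, hω, Finset.sum_range_succ]
  ring

lemma memLp_kingmanWalk {p : ENNReal} (hcos : ∀ᵐ z ∂ρ, |z.2| ≤ 1) (hstep : MemLp Prod.fst p ρ)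
    (n : ℕ) : MemLp (kingmanWalk n) p (iidLaw ρ) := by
  have heval := measurePreserving_eval_infinitePi fun _ : ℕ => ρ
  induction n with
  | zero => exact memLp_const 0
  | succ n ih =>
    refine (ih.norm.add (hstep.comp_measurePreserving (heval n)).norm).mono
      (by fun_prop) ?_
    filter_upwards [(heval n).quasiMeasurePreserving.ae hcos] with ω hω
    rw [Real.norm_of_nonneg (kingmanWalk_nonneg _ _)]
    exact (kingmanRadius_le _ _ hω).trans (le_abs_self _)

lemma memLp_kingmanDefect (hcos : ∀ᵐ z ∂ρ, |z.2| ≤ 1) (hstep : MemLp Prod.fst 2 ρ) (n : ℕ) :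
    MemLp (kingmanDefect n) 2 (iidLaw ρ) := by
  induction n with
  | zero =>
    have hzero : kingmanDefect 0 = fun _ => 0 := by ext; simp [kingmanDefect, kingmanWalk]
    exact hzero ▸ memLp_const 0
  | succ n ih =>
    have hinc : MemLp (fun ω : ℕ → ℝ × ℝ => 2 * ((ω n).1 * (ω n).2)) 2 (iidLaw ρ) :=
      ((memLp_fst_mul_snd hcos hstep).const_mul 2).comp_measurePreserving
        (measurePreserving_eval_infinitePi (fun _ : ℕ => ρ) n)
    have hindep := (indepFun_kingmanWalk (ρ := ρ) n).comp (φ := id) (ψ := fun z => 2 * (z.1 * z.2))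
      measurable_id (by fun_prop)
    exact (ih.add (memLp_two_mul_of_indepFun (memLp_kingmanWalk hcos hstep n) hinc hindep)).ae_eq
      ((ae_kingmanDefect_succ hcos n).mono fun _ h => h.symm)

lemma integral_kingmanWalk_sq (hcos : ∀ᵐ z ∂ρ, |z.2| ≤ 1) (hstep : MemLp Prod.fst 2 ρ)
    (hcentered : ∫ z, z.1 * z.2 ∂ρ = 0) (n : ℕ) :
    ∫ ω, kingmanWalk n ω ^ 2 ∂iidLaw ρ = n * ∫ z, z.1 ^ 2 ∂ρ := by
  induction n with
  | zero => simp [kingmanWalk]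
  | succ n ih =>
    have heval := measurePreserving_eval_infinitePi (fun _ : ℕ => ρ) n
    have hwalk := memLp_kingmanWalk hcos hstep n
    have hinc := (memLp_fst_mul_snd hcos hstep).comp_measurePreserving heval
    have hwalk_sq : Integrable (fun ω => kingmanWalk n ω ^ 2) (iidLaw ρ) := hwalk.integrable_sq
    have hstep_sq : Integrable (fun ω : ℕ → ℝ × ℝ => (ω n).1 ^ 2) (iidLaw ρ) :=
      (hstep.comp_measurePreserving heval).integrable_sq
    have hcross : Integrable (fun ω => 2 * (kingmanWalk n ω * ((ω n).1 * (ω n).2))) (iidLaw ρ) :=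
      (hwalk.integrable_mul hinc).const_mul 2
    have hindep := (indepFun_kingmanWalk (ρ := ρ) n).comp (φ := id) (ψ := fun z => z.1 * z.2)
      measurable_id (by fun_prop)
    have cross : ∫ ω, kingmanWalk n ω * ((ω n).1 * (ω n).2) ∂iidLaw ρ = 0 :=
      integral_mul_eq_zero_of_indepFun hwalk.aestronglyMeasurable hinc.aestronglyMeasurable
        hindep
        ((integral_eval_iidLaw ρ (f := fun z => z.1 * z.2) (by fun_prop) n).trans hcentered)
    rw [integral_congr_ae (ae_kingmanWalk_succ_sq hcos n),
      integral_add (by exact hwalk_sq.add hstep_sq) hcross, integral_add hwalk_sq hstep_sq,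
      integral_const_mul, cross, ih,
      integral_eval_iidLaw ρ (f := fun z => z.1 ^ 2) (by fun_prop) n]
    push_cast
    ring

lemma integral_kingmanDefect_sq (hcos : ∀ᵐ z ∂ρ, |z.2| ≤ 1) (hstep : MemLp Prod.fst 2 ρ)
    (hcentered : ∫ z, z.1 * z.2 ∂ρ = 0) (n : ℕ) :
    ∫ ω, kingmanDefect n ω ^ 2 ∂iidLaw ρ =
      2 * n * (n - 1) * (∫ z, z.1 ^ 2 ∂ρ) * ∫ z, (z.1 * z.2) ^ 2 ∂ρ := by
  induction n with
  | zero => simp [kingmanDefect, kingmanWalk]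
  | succ n ih =>
    have hinc : MemLp (fun ω : ℕ → ℝ × ℝ => 2 * ((ω n).1 * (ω n).2)) 2 (iidLaw ρ) :=
      ((memLp_fst_mul_snd hcos hstep).const_mul 2).comp_measurePreserving
        (measurePreserving_eval_infinitePi (fun _ : ℕ => ρ) n)
    have hinc_mean : ∫ ω, 2 * ((ω n).1 * (ω n).2) ∂iidLaw ρ = 0 := by
      rw [integral_const_mul, integral_eval_iidLaw ρ (f := fun z => z.1 * z.2) (by fun_prop) n,
        hcentered, mul_zero]
    have hinc_sq : ∫ ω, (2 * ((ω n).1 * (ω n).2)) ^ 2 ∂iidLaw ρ =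
        4 * ∫ z, (z.1 * z.2) ^ 2 ∂ρ := by
      rw [integral_eval_iidLaw ρ (f := fun z => (2 * (z.1 * z.2)) ^ 2) (by fun_prop) n,
        ← integral_const_mul]
      congr with z
      ring
    have hindep := (indepFun_kingmanDefect_kingmanWalk (ρ := ρ) n).comp (φ := id)
      (ψ := fun z => 2 * (z.1 * z.2)) measurable_id (by fun_prop)
    rw [integral_congr_ae ((ae_kingmanDefect_succ hcos n).mono fun _ h => congrArg (· ^ 2) h),
      integral_sq_add_mul_of_indepFun (memLp_kingmanDefect hcos hstep n)
        (memLp_kingmanWalk hcos hstep n) hinc hindep hinc_mean, ih,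
      integral_kingmanWalk_sq hcos hstep hcentered, hinc_sq]
    push_cast
    ring

end Walk

section ConvolutionPower

lemma map_prod_eq_bind {α β γ : Type*} [MeasurableSpace α] [MeasurableSpace β] [MeasurableSpace γ]
    (P : Measure α) (Q : Measure β) [SFinite Q] {f : α × β → γ} (hf : Measurable f) :
    (P.prod Q).map f = P.bind fun x => Q.map fun y => f (x, y) := by
  have hsection (x : α) : Q.map (fun y => f (x, y)) = (Q.map (Prod.mk x)).map f :=
    (Measure.map_map hf measurable_prodMk_left).symm
  have hkernel : Measurable fun x => Q.map fun y => f (x, y) := by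
    simp only [hsection]
    exact (Measure.measurable_map f hf).comp Measurable.map_prodMk_left
  ext s hs
  rw [Measure.map_apply hf hs, Measure.prod_apply (hf hs),
    Measure.bind_apply hs hkernel.aemeasurable]
  congr with x
  exact (Measure.map_apply (by fun_prop) hs).symm

lemma kingmanConvStep_eq_map_prod {μ : ℝ} [SFinite (kingmanCosineLaw μ)] (ν P : Measure ℝ)
    [SFinite ν] : kingmanConvStep μ ν P =
      (P.prod (ν.prod (kingmanCosineLaw μ))).map fun p => kingmanRadius p.1 p.2.1 p.2.2 := by
  rw [map_prod_eq_bind _ _ measurable_kingmanRadius]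
  refine congrArg P.bind (funext fun r => ?_)
  exact (map_prod_eq_bind ν _ (measurable_kingmanRadius.comp measurable_prodMk_left)).symm

lemma map_kingmanWalk_iidLaw {μ : ℝ} [IsProbabilityMeasure (kingmanCosineLaw μ)] (ν : Measure ℝ)
    [IsProbabilityMeasure ν] (n : ℕ) :
    (iidLaw (ν.prod (kingmanCosineLaw μ))).map (kingmanWalk n) = kingmanConvPower μ ν n := by
  induction n with
  | zero => simp [kingmanWalk, kingmanConvPower]
  | succ n ih =>
    set ρ := ν.prod (kingmanCosineLaw μ)
    have hmeas : Measurable fun ω : ℕ → ℝ × ℝ => (kingmanWalk n ω, ω n) :=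
      (measurable_kingmanWalk n).prodMk (measurable_pi_apply n)
    have joint_law : (iidLaw ρ).map (fun ω => (kingmanWalk n ω, ω n)) =
        (kingmanConvPower μ ν n).prod ρ := by
      rw [(indepFun_iff_map_prod_eq_prod_map_map hmeas.fst.aemeasurable
        hmeas.snd.aemeasurable).1 (indepFun_kingmanWalk n), ih]
      congr 1
      exact (measurePreserving_eval_infinitePi (fun _ : ℕ => ρ) n).map_eq
    calc (iidLaw ρ).map (kingmanWalk (n + 1))
        = ((iidLaw ρ).map fun ω => (kingmanWalk n ω, ω n)).map
            fun p => kingmanRadius p.1 p.2.1 p.2.2 :=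
          (Measure.map_map measurable_kingmanRadius hmeas).symm
      _ = kingmanConvStep μ ν (kingmanConvPower μ ν n) := by
          rw [joint_law, kingmanConvStep_eq_map_prod]
      _ = kingmanConvPower μ ν (n + 1) := (Function.iterate_succ_apply' _ _ _).symm

end ConvolutionPower

section Concentration

lemma sq_sub_le_abs_sq_sub_sq {a b : ℝ} (ha : 0 ≤ a) (hb : 0 ≤ b) :
    (a - b) ^ 2 ≤ |a ^ 2 - b ^ 2| := by
  have triangle : |a - b| ≤ a + b := abs_le.2 ⟨by linarith, by linarith⟩
  calc (a - b) ^ 2 = |a - b| * |a - b| := by rw [← sq, sq_abs]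
    _ ≤ (a + b) * |a - b| := by gcongr
    _ = |a ^ 2 - b ^ 2| := by rw [sq_sub_sq, abs_mul, abs_of_nonneg (add_nonneg ha hb)]

lemma le_abs_sq_sub_or_of_le_abs_div_sqrt_sub_sqrt {s t m n ε : ℝ} (hs : 0 ≤ s) (hm : 0 ≤ m)
    (hn : 0 < n) (hε : 0 ≤ ε) (h : ε ≤ |s / √n - √m|) :
    ε ^ 2 / 2 * n ≤ |s ^ 2 - t| ∨ ε ^ 2 / 2 ≤ |t / n - m| := by
  have total : ε ^ 2 ≤ |s ^ 2 - t| / n + |t / n - m| := by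
    calc ε ^ 2 ≤ (s / √n - √m) ^ 2 := by
          rw [← sq_abs (s / √n - √m)]
          gcongr
      _ ≤ |(s / √n) ^ 2 - √m ^ 2| := sq_sub_le_abs_sq_sub_sq (by positivity) (by positivity)
      _ = |(s ^ 2 - t) / n + (t / n - m)| := by
          rw [div_pow, Real.sq_sqrt hn.le, Real.sq_sqrt hm]
          ring_nf
      _ ≤ |s ^ 2 - t| / n + |t / n - m| := by
          rw [← abs_of_pos hn, ← abs_div, abs_of_pos hn]
          exact abs_add_le _ _
  by_contra! hsmall
  linarith [(div_lt_iff₀ hn).2 hsmall.1]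

lemma measure_kingmanWalk_deviation_le {ρ : Measure (ℝ × ℝ)} [IsProbabilityMeasure ρ]
    (hcos : ∀ᵐ z ∂ρ, |z.2| ≤ 1) (hstep : MemLp Prod.fst 2 ρ) (hcentered : ∫ z, z.1 * z.2 ∂ρ = 0)
    {m ε : ℝ} (hm : 0 ≤ m) (hε : 0 < ε) {n : ℕ} (hn : n ≠ 0) :
    iidLaw ρ {ω | ε ≤ |kingmanWalk n ω / √n - √m|} ≤
      ENNReal.ofReal (8 * (∫ z, z.1 ^ 2 ∂ρ) * (∫ z, (z.1 * z.2) ^ 2 ∂ρ) / ε ^ 4) +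
        iidLaw ρ {ω | ε ^ 2 / 2 ≤ |(∑ i ∈ Finset.range n, (ω i).1 ^ 2) / n - m|} := by
  have hn' : (0 : ℝ) < n := by positivity
  have dichotomy : {ω | ε ≤ |kingmanWalk n ω / √n - √m|} ⊆
      {ω | ε ^ 2 / 2 * n ≤ |kingmanDefect n ω|} ∪
        {ω | ε ^ 2 / 2 ≤ |(∑ i ∈ Finset.range n, (ω i).1 ^ 2) / n - m|} := fun ω hω =>
    le_abs_sq_sub_or_of_le_abs_div_sqrt_sub_sqrt (kingmanWalk_nonneg n ω) hm hn' hε.le hω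
  have chebyshev := measure_le_abs_le_integral_sq_div_sq (memLp_kingmanDefect hcos hstep n)
    (c := ε ^ 2 / 2 * n) (by positivity)
  refine (measure_mono dichotomy).trans ((measure_union_le _ _).trans (add_le_add_left ?_ _))
  refine chebyshev.trans (ENNReal.ofReal_le_ofReal ?_)
  rw [integral_kingmanDefect_sq hcos hstep hcentered,
    div_le_div_iff₀ (by positivity) (by positivity)]
  set a := ∫ z, z.1 ^ 2 ∂ρ
  set b := ∫ z, (z.1 * z.2) ^ 2 ∂ρ
  have : 0 ≤ a := integral_nonneg fun _ => sq_nonneg _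
  have : 0 ≤ b := integral_nonneg fun _ => sq_nonneg _
  calc 2 * n * (n - 1) * a * b * ε ^ 4 ≤ 2 * n * n * a * b * ε ^ 4 := by
        gcongr
        linarith
    _ = 8 * a * b * (ε ^ 2 / 2 * n) ^ 2 := by ring

lemma kingmanConvPower_deviation_le (ν : Measure ℝ) [IsProbabilityMeasure ν]
    (hmom : Integrable (fun s => s ^ 2) ν) {μ ε : ℝ} (hμ : 1 / 2 < μ) (hε : 0 < ε) {n : ℕ}
    (hn : n ≠ 0) :
    kingmanConvPower μ ν n {s | ε ≤ |s / √n - √(∫ s, s ^ 2 ∂ν)|} ≤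
      ENNReal.ofReal (4 * (∫ s, s ^ 2 ∂ν) ^ 2 / ε ^ 4 / μ) +
        iidLaw ν {ω | ε ^ 2 / 2 ≤
          |(∑ i ∈ Finset.range n, ω i ^ 2) / n - ∫ s, s ^ 2 ∂ν|} := by
  have := isProbabilityMeasure_kingmanCosineLaw hμ
  set m := ∫ s, s ^ 2 ∂ν
  set ρ := ν.prod (kingmanCosineLaw μ)
  have hcos : ∀ᵐ z ∂ρ, |z.2| ≤ 1 :=
    Measure.quasiMeasurePreserving_snd.ae (ae_abs_le_one_kingmanCosineLaw μ)
  have hstep : MemLp Prod.fst 2 ρ :=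
    ((memLp_two_iff_integrable_sq aestronglyMeasurable_id).2 hmom).comp_fst _
  have hcentered : ∫ z, z.1 * z.2 ∂ρ = 0 := by
    rw [integral_prod_mul (fun s => s) fun v => v, integral_id_kingmanCosineLaw, mul_zero]
  have step_sq : ∫ z, z.1 ^ 2 ∂ρ = m := by
    simpa using integral_fun_fst (μ := ν) (ν := kingmanCosineLaw μ) fun s => s ^ 2
  have increment_sq : ∫ z, (z.1 * z.2) ^ 2 ∂ρ = m * (1 / (2 * μ)) := by
    simp only [mul_pow]
    rw [integral_prod_mul (fun s => s ^ 2) fun v => v ^ 2, integral_sq_kingmanCosineLaw hμ]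
  have step_average : iidLaw ρ {ω | ε ^ 2 / 2 ≤ |(∑ i ∈ Finset.range n, (ω i).1 ^ 2) / n - m|} =
      iidLaw ν {ω | ε ^ 2 / 2 ≤ |(∑ i ∈ Finset.range n, ω i ^ 2) / n - m|} := by
    rw [← map_fst_iidLaw_prod ν (kingmanCosineLaw μ), Measure.map_apply (by fun_prop)
      (measurableSet_le measurable_const (by fun_prop))]
    rfl
  rw [← map_kingmanWalk_iidLaw, Measure.map_apply (by fun_prop)
    (measurableSet_le measurable_const (by fun_prop)), ← step_average]
  refine (measure_kingmanWalk_deviation_le hcos hstep hcentered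
    (integral_nonneg fun _ => sq_nonneg _) hε hn).trans_eq ?_
  rw [step_sq, increment_sq]
  congr 2
  field_simp
  ring

end Concentration

theorem stmt_17_general {ι : Type*} {l : Filter ι} (ν : Measure ℝ) [IsProbabilityMeasure ν]
    (hmom : Integrable (fun s => s ^ 2) ν) {μ : ι → ℝ} {n : ι → ℕ} (hμ : Tendsto μ l atTop)
    (hn : Tendsto n l atTop) :
    ∀ ε > 0, Tendsto
      (fun i => kingmanConvPower (μ i) ν (n i) {s | ε ≤ |s / √(n i) - √(∫ s, s ^ 2 ∂ν)|})
      l (𝓝 0) := by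
  intro ε hε
  have defect_bound : Tendsto
      (fun i => ENNReal.ofReal (4 * (∫ s, s ^ 2 ∂ν) ^ 2 / ε ^ 4 / μ i)) l (𝓝 0) := by
    simpa using ENNReal.tendsto_ofReal (hμ.const_div_atTop (4 * (∫ s, s ^ 2 ∂ν) ^ 2 / ε ^ 4))
  have step_average := (tendsto_measure_average_deviation_iidLaw (measurable_id.pow_const 2) hmom
    (δ := ε ^ 2 / 2) (by positivity)).comp hn
  refine tendsto_of_tendsto_of_tendsto_of_le_of_le' tendsto_const_nhds
    (by simpa using defect_bound.add step_average) (Eventually.of_forall fun _ => zero_le) ?_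
  filter_upwards [hμ.eventually_gt_atTop (1 / 2), hn.eventually_ne_atTop 0] with i hμi hni
  exact kingmanConvPower_deviation_le ν hmom hμi hε hni

theorem stmt_17 (ν : Measure ℝ) [IsProbabilityMeasure ν]
    (hsupp : ν {s | s < 0} = 0)
    (hmom : Integrable (fun s => s ^ 2) ν) (hpos : 0 < ∫ s, s ^ 2 ∂ν)
    (μk : ℕ → ℝ) (hμk : ∀ k, 1 / 2 < μk k)
    (hμtop : Filter.Tendsto μk Filter.atTop Filter.atTop) :
    ∀ ε > 0,
      Filter.Tendsto
        (fun k => kingmanConvPower (μk k) ν k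
          {s : ℝ | ε ≤ |s / Real.sqrt k - Real.sqrt (∫ s, s ^ 2 ∂ν)|})
        Filter.atTop (nhds 0) :=
  stmt_17_general ν hmom hμtop tendsto_id
end
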